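/- For every k = 1, …, d, with λ_i := lim_{p→∞} λ_i(p) the limiting eigenvalues of Z_p := (A^{p/2} B^p A^{p/2})^{1/p}, one has λ_1 λ_2 ⋯ λ_k = max{ a_I b_J : I, J ⊆ {1,…,d}, |I| = |J| = k, det (V*W)_{I,J} ≠ 0 }, where (V*W)_{I,J} is the k×k submatrix of V*W with rows indexed by I and columns by J, a_I := ∏_{i∈I} a_i and b_J := ∏_{j∈J} b_j. -/

import Mathlib

open Matrix Filter Topology Finset
open scoped ComplexOrder

/-- Functional-calculus power of a (Hermitian, in practice positive semidefinite)
matrix, with the convention `0 ^ r = 0` for `r > 0`. -/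
noncomputable def psdPow {d : ℕ} (A : Matrix (Fin d) (Fin d) ℂ) (r : ℝ) :
    Matrix (Fin d) (Fin d) ℂ :=
  if hA : A.IsHermitian then
    (hA.eigenvectorUnitary : Matrix (Fin d) (Fin d) ℂ) *
      Matrix.diagonal (fun i => ((hA.eigenvalues i ^ r : ℝ) : ℂ)) *
      star (hA.eigenvectorUnitary : Matrix (Fin d) (Fin d) ℂ)
  else 0

/-- The eigenvalues of a Hermitian matrix, sorted in decreasing order
(with multiplicities). -/
noncomputable def eigsDesc {d : ℕ} (A : Matrix (Fin d) (Fin d) ℂ) : Fin d → ℝ :=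
  if hA : A.IsHermitian then
    fun i => hA.eigenvalues (Tuple.sort hA.eigenvalues i.rev)
  else 0

/-- `Zmat A B p = (A^{p/2} B^p A^{p/2})^{1/p}`. -/
noncomputable def Zmat {d : ℕ} (A B : Matrix (Fin d) (Fin d) ℂ) (p : ℝ) :
    Matrix (Fin d) (Fin d) ℂ :=
  psdPow (psdPow A (p / 2) * psdPow B p * psdPow A (p / 2)) (1 / p)

/-!
The `k`-th compound matrix is multiplicative by Cauchy–Binet and the trace is cyclic, so the `k`-th
compounds of `Z_p ^ p = A^{p/2} B^p A^{p/2}` and of `A^p B^p` have the same trace. In terms of the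
eigenvalues this reads
`∑_{|I| = k} (∏_{i ∈ I} λ_i(p))^p = ∑_{|I| = |J| = k} |det (V*W)_{I,J}|² (a_I b_J)^p`.
Up to constants independent of `p`, the left side is `(λ_1(p) ⋯ λ_k(p))^p` and the right side is
the `p`-th power of the largest `a_I b_J` with nonzero coefficient. Taking `p`-th roots removes the
constants as `p → ∞`.
-/

section Compound

variable {R l m n : Type*} [CommRing R] {k : ℕ}

/-- The `k`-th compound matrix: its entry at `(I, J)` is the minor of `M` with row set `I` and
column set `J`, both enumerated increasingly. -/
def compoundMatrix [LinearOrder m] [LinearOrder n] (k : ℕ) (M : Matrix m n R) :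
    Matrix (Set.powersetCard m k) (Set.powersetCard n k) R :=
  .of fun I J => (M.submatrix (I.1.orderEmbOfFin I.2) (J.1.orderEmbOfFin J.2)).det

lemma compoundMatrix_apply [LinearOrder m] [LinearOrder n] (M : Matrix m n R)
    (I : Set.powersetCard m k) (J : Set.powersetCard n k) :
    compoundMatrix k M I J =
      (M.submatrix (I.1.orderEmbOfFin I.2) (J.1.orderEmbOfFin J.2)).det :=
  rfl

lemma prod_orderEmbOfFin [LinearOrder n] {M : Type*} [CommMonoid M] {s : Finset n}
    (hs : s.card = k) (f : n → M) : ∏ r, f (s.orderEmbOfFin hs r) = ∏ i ∈ s, f i := by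
  conv_rhs => rw [← map_orderEmbOfFin_univ s hs, prod_map]
  rfl

lemma compoundMatrix_conjTranspose [StarRing R] [LinearOrder m] [LinearOrder n] (M : Matrix m n R) :
    compoundMatrix k Mᴴ = (compoundMatrix k M)ᴴ := by
  ext I J
  rw [conjTranspose_apply, compoundMatrix_apply, compoundMatrix_apply, ← det_conjTranspose,
    conjTranspose_submatrix]

lemma compoundMatrix_diagonal [LinearOrder n] (v : n → R) :
    compoundMatrix k (diagonal v) = diagonal fun I => ∏ i ∈ I.1, v i := by
  ext I J
  obtain rfl | hIJ := eq_or_ne I J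
  · rw [compoundMatrix_apply, submatrix_diagonal _ _ (I.1.orderEmbOfFin I.2).injective,
      det_diagonal, diagonal_apply_eq]
    exact prod_orderEmbOfFin I.2 v
  · obtain ⟨i, hiI, hiJ⟩ := (Set.powersetCard.exists_mem_notMem_iff_ne I J).mp hIJ
    obtain ⟨r, rfl⟩ := (Set.powersetCard.mem_range_ofFinEmbEquiv_symm_iff_mem I i).mpr hiI
    rw [diagonal_apply_ne _ hIJ, compoundMatrix_apply]
    refine det_eq_zero_of_row_eq_zero r fun c => diagonal_apply_ne _ fun h => hiJ ?_
    exact (Set.powersetCard.mem_range_ofFinEmbEquiv_symm_iff_mem J _).mp ⟨c, h.symm⟩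

lemma compoundMatrix_one [LinearOrder n] : compoundMatrix k (1 : Matrix n n R) = 1 := by
  simp [← diagonal_one, compoundMatrix_diagonal]

lemma sum_powersetCard_univ [Fintype n] {M : Type*} [AddCommMonoid M] (f : Finset n → M) :
    ∑ s ∈ univ.powersetCard k, f s = ∑ s : Set.powersetCard n k, f s :=
  sum_subtype _ (by simp [Set.powersetCard.mem_iff]) f

variable [Fintype n] [LinearOrder n]

lemma det_mul_eq_sum_powersetCard (M : Matrix (Fin k) n R) (N : Matrix n (Fin k) R) :
    (M * N).det = ∑ s : Set.powersetCard n k,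
      (M.submatrix id (s.1.orderEmbOfFin s.2)).det *
        (N.submatrix (s.1.orderEmbOfFin s.2) id).det := by
  nontriviality R
  -- Cauchy–Binet: compare the coefficients of `X ^ card n` in the identity
  -- `X ^ card n * χ(MN) = X ^ k * χ(NM)`.
  have hcoeff := congrArg (·.coeff (Fintype.card n)) (charpoly_mul_comm' M N)
  simp only [Fintype.card_fin, Polynomial.coeff_X_pow_mul', le_refl, if_true, Nat.sub_self]
    at hcoeff
  have hminor (s : Set.powersetCard n k) :
      ((N * M).submatrix (Subtype.val : s.1 → n) Subtype.val).det =
        (M.submatrix id (s.1.orderEmbOfFin s.2)).det *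
          (N.submatrix (s.1.orderEmbOfFin s.2) id).det := by
    rw [← det_submatrix_equiv_self (s.1.orderIsoOfFin s.2).toEquiv, mul_comm, ← det_mul]
    rfl
  rw [det_eq_sign_charpoly_coeff, hcoeff, Fintype.card_fin]
  split_ifs with hk
  · rw [charpoly_coeff_eq_sum_minors _ _ hk, sum_powersetCard_univ, ← mul_assoc, ← mul_pow]
    simp only [neg_mul_neg, one_mul, one_pow, hminor]
  · have : IsEmpty (Set.powersetCard n k) :=
      ⟨fun s => hk (s.2.symm.trans_le (card_le_univ s.1))⟩
    simp

lemma compoundMatrix_mul [LinearOrder l] [LinearOrder m] (M : Matrix l n R) (N : Matrix n m R) :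
    compoundMatrix k (M * N) = compoundMatrix k M * compoundMatrix k N := by
  ext I J
  rw [compoundMatrix_apply, submatrix_mul M N _ id _ Function.bijective_id,
    det_mul_eq_sum_powersetCard]
  rfl

variable [StarRing R]

lemma trace_compoundMatrix_conj_diagonal {V : Matrix n n R} (hV : V ∈ unitaryGroup n R)
    (v : n → R) : (compoundMatrix k (V * diagonal v * Vᴴ)).trace =
      ∑ I : Set.powersetCard n k, ∏ i ∈ I.1, v i := by
  rw [compoundMatrix_mul, trace_mul_comm, ← compoundMatrix_mul, ← Matrix.mul_assoc,
    ← star_eq_conjTranspose, mem_unitaryGroup_iff'.mp hV, Matrix.one_mul,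
    compoundMatrix_diagonal, trace_diagonal]

lemma trace_compoundMatrix_conj_diagonal_mul (V W : Matrix n n R) (v w : n → R) :
    (compoundMatrix k (V * diagonal v * Vᴴ * (W * diagonal w * Wᴴ))).trace =
      ∑ q : Set.powersetCard n k × Set.powersetCard n k,
        compoundMatrix k (Vᴴ * W) q.1 q.2 * star (compoundMatrix k (Vᴴ * W) q.1 q.2) *
          ((∏ i ∈ q.1.1, v i) * ∏ j ∈ q.2.1, w j) := by
  have hcycle : (compoundMatrix k (V * diagonal v * Vᴴ * (W * diagonal w * Wᴴ))).trace =
      (compoundMatrix k (diagonal v * (Vᴴ * W) * diagonal w * (Vᴴ * W)ᴴ)).trace := by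
    rw [Matrix.mul_assoc V, Matrix.mul_assoc V, compoundMatrix_mul, trace_mul_comm,
      ← compoundMatrix_mul]
    simp only [Matrix.mul_assoc, conjTranspose_mul, conjTranspose_conjTranspose]
  rw [hcycle, compoundMatrix_mul, compoundMatrix_mul, compoundMatrix_mul,
    compoundMatrix_conjTranspose, compoundMatrix_diagonal, compoundMatrix_diagonal,
    Fintype.sum_prod_type, trace]
  refine sum_congr rfl fun I _ => sum_congr rfl fun J _ => ?_
  simp only [mul_diagonal, diagonal_mul, conjTranspose_apply]
  ring

lemma exists_compoundMatrix_apply_ne_zero [Nontrivial R] {U : Matrix n n R}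
    (hU : U ∈ unitaryGroup n R) (hk : k ≤ Fintype.card n) :
    ∃ I J, compoundMatrix k U I J ≠ 0 := by
  obtain ⟨I, hI⟩ := exists_subset_card_eq (s := (univ : Finset n)) hk
  by_contra! h
  have hzero : compoundMatrix k U = 0 := Matrix.ext h
  have hone : compoundMatrix k U * compoundMatrix k Uᴴ = 1 := by
    rw [← compoundMatrix_mul, ← star_eq_conjTranspose, mem_unitaryGroup_iff.mp hU,
      compoundMatrix_one]
  have := congrFun₂ hone ⟨I, hI.2⟩ ⟨I, hI.2⟩
  simp [hzero] at this

end Compound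

section Spectral

variable {𝕜 m n : Type*} [RCLike 𝕜] [Fintype m] [Fintype n] [DecidableEq m] [DecidableEq n]

lemma mul_diagonal_comp_of_intertwine {X : Matrix m n 𝕜} {a : n → ℝ} {b : m → ℝ}
    (h : X * diagonal (fun i => (a i : 𝕜)) = diagonal (fun i => (b i : 𝕜)) * X) (f : ℝ → ℝ) :
    X * diagonal (fun i => (f (a i) : 𝕜)) = diagonal (fun i => (f (b i) : 𝕜)) * X := by
  ext i j
  have hij := congrFun₂ h i j
  rw [mul_diagonal, diagonal_mul, mul_comm] at hij ⊢
  by_cases hX : X i j = 0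
  · simp only [hX, mul_zero]
  · rw [RCLike.ofReal_injective (mul_right_cancel₀ hX hij)]

lemma conj_diagonal_comp_unique {V W : Matrix n n 𝕜} (hV : V ∈ unitaryGroup n 𝕜)
    (hW : W ∈ unitaryGroup n 𝕜) {a b : n → ℝ}
    (h : V * diagonal (fun i => (a i : 𝕜)) * Vᴴ = W * diagonal (fun i => (b i : 𝕜)) * Wᴴ)
    (f : ℝ → ℝ) :
    V * diagonal (fun i => (f (a i) : 𝕜)) * Vᴴ = W * diagonal (fun i => (f (b i) : 𝕜)) * Wᴴ := by
  have hVV' : V * Vᴴ = 1 := mem_unitaryGroup_iff.mp hV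
  have hV'V : Vᴴ * V = 1 := mem_unitaryGroup_iff'.mp hV
  have hWW' : W * Wᴴ = 1 := mem_unitaryGroup_iff.mp hW
  have hW'W : Wᴴ * W = 1 := mem_unitaryGroup_iff'.mp hW
  have hintertwine :
      Wᴴ * V * diagonal (fun i => (a i : 𝕜)) = diagonal (fun i => (b i : 𝕜)) * (Wᴴ * V) := by
    calc Wᴴ * V * diagonal (fun i => (a i : 𝕜))
        = Wᴴ * (V * diagonal (fun i => (a i : 𝕜)) * Vᴴ) * V := by
          simp only [Matrix.mul_assoc, hV'V, Matrix.mul_one]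
      _ = diagonal (fun i => (b i : 𝕜)) * (Wᴴ * V) := by
          rw [h]; simp only [← Matrix.mul_assoc, hW'W, Matrix.one_mul]
  calc V * diagonal (fun i => (f (a i) : 𝕜)) * Vᴴ
      = W * (Wᴴ * V * diagonal (fun i => (f (a i) : 𝕜))) * Vᴴ := by
        simp only [← Matrix.mul_assoc, hWW', Matrix.one_mul]
    _ = W * diagonal (fun i => (f (b i) : 𝕜)) * Wᴴ := by
        rw [mul_diagonal_comp_of_intertwine hintertwine]
        simp only [Matrix.mul_assoc, hVV', Matrix.mul_one]

lemma isHermitian_conj_diagonal (V : Matrix n n 𝕜) (a : n → ℝ) :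
    (V * diagonal (fun i => (a i : 𝕜)) * Vᴴ).IsHermitian :=
  isHermitian_mul_mul_conjTranspose V <| isHermitian_diagonal_iff.mpr fun i =>
    RCLike.conj_ofReal (a i)

lemma posSemidef_conj_diagonal (V : Matrix n n 𝕜) {a : n → ℝ} (ha : ∀ i, 0 ≤ a i) :
    (V * diagonal (fun i => (a i : 𝕜)) * Vᴴ).PosSemidef :=
  PosSemidef.mul_mul_conjTranspose_same
    (posSemidef_diagonal_iff.mpr fun i => RCLike.ofReal_nonneg.mpr (ha i)) V

lemma conj_diagonal_mul_conj_diagonal {R : Type*} [CommRing R] [StarRing R] {V : Matrix n n R}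
    (hV : V ∈ unitaryGroup n R) (v w : n → R) :
    V * diagonal v * Vᴴ * (V * diagonal w * Vᴴ) = V * diagonal (fun i => v i * w i) * Vᴴ := by
  have hV'V : Vᴴ * V = 1 := mem_unitaryGroup_iff'.mp hV
  rw [← diagonal_mul_diagonal]
  simp only [Matrix.mul_assoc]
  rw [← Matrix.mul_assoc Vᴴ V, hV'V, Matrix.one_mul]

end Spectral

section PsdPow

variable {d : ℕ} {A V : Matrix (Fin d) (Fin d) ℂ}

lemma eq_conj_diagonal_eigenvalues (hA : A.IsHermitian) :
    A = (hA.eigenvectorUnitary : Matrix (Fin d) (Fin d) ℂ) *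
      diagonal (fun i => (hA.eigenvalues i : ℂ)) *
        (hA.eigenvectorUnitary : Matrix (Fin d) (Fin d) ℂ)ᴴ :=
  hA.spectral_theorem.trans (Unitary.conjStarAlgAut_apply ..)

lemma psdPow_conj_diagonal (hV : V ∈ unitaryGroup (Fin d) ℂ) (a : Fin d → ℝ) (r : ℝ) :
    psdPow (V * diagonal (fun i => (a i : ℂ)) * Vᴴ) r =
      V * diagonal (fun i => ((a i ^ r : ℝ) : ℂ)) * Vᴴ := by
  have hA : (V * diagonal (fun i => (a i : ℂ)) * Vᴴ).IsHermitian := isHermitian_conj_diagonal V a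
  rw [psdPow, dif_pos hA]
  exact conj_diagonal_comp_unique hA.eigenvectorUnitary.2 hV
    (eq_conj_diagonal_eigenvalues hA).symm (· ^ r)

lemma exists_unitary_eq_conj_diagonal_eigsDesc (hA : A.IsHermitian) :
    ∃ Q ∈ unitaryGroup (Fin d) ℂ, A = Q * diagonal (fun i => (eigsDesc A i : ℂ)) * Qᴴ := by
  let σ : Equiv.Perm (Fin d) := Fin.revPerm.trans (Tuple.sort hA.eigenvalues)
  let U : Matrix (Fin d) (Fin d) ℂ := hA.eigenvectorUnitary
  have hUU' : U * Uᴴ = 1 := mem_unitaryGroup_iff.mp hA.eigenvectorUnitary.2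
  have heigs : eigsDesc A = hA.eigenvalues ∘ σ := by
    rw [eigsDesc, dif_pos hA]
    rfl
  refine ⟨U.submatrix id σ, mem_unitaryGroup_iff.mpr ?_, ?_⟩
  · rw [star_eq_conjTranspose, conjTranspose_submatrix, submatrix_mul_equiv, hUU', submatrix_id_id]
  · have hdiag : diagonal (fun i => (eigsDesc A i : ℂ)) =
        (diagonal fun i => (hA.eigenvalues i : ℂ)).submatrix σ σ := by
      rw [heigs, submatrix_diagonal_equiv]
      rfl
    rw [hdiag, conjTranspose_submatrix, submatrix_mul_equiv, submatrix_mul_equiv, submatrix_id_id]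
    exact eq_conj_diagonal_eigenvalues hA

lemma eigsDesc_antitone (A : Matrix (Fin d) (Fin d) ℂ) : Antitone (eigsDesc A) := by
  rw [eigsDesc]
  split_ifs with hA
  · exact fun i j hij => Tuple.monotone_sort hA.eigenvalues (Fin.rev_le_rev.mpr hij)
  · exact antitone_const

lemma eigsDesc_nonneg (hA : A.PosSemidef) (i : Fin d) : 0 ≤ eigsDesc A i := by
  rw [eigsDesc, dif_pos hA.isHermitian]
  exact hA.eigenvalues_nonneg _

lemma exists_unitary_eq_conj_diagonal_of_posSemidef (hA : A.PosSemidef) :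
    ∃ Q ∈ unitaryGroup (Fin d) ℂ, ∃ a : Fin d → ℝ, (∀ i, 0 ≤ a i) ∧
      A = Q * diagonal (fun i => (a i : ℂ)) * Qᴴ :=
  let ⟨Q, hQ, hAQ⟩ := exists_unitary_eq_conj_diagonal_eigsDesc hA.isHermitian
  ⟨Q, hQ, eigsDesc A, eigsDesc_nonneg hA, hAQ⟩

lemma posSemidef_psdPow (hA : A.PosSemidef) (r : ℝ) : (psdPow A r).PosSemidef := by
  obtain ⟨Q, hQ, a, ha, rfl⟩ := exists_unitary_eq_conj_diagonal_of_posSemidef hA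
  rw [psdPow_conj_diagonal hQ]
  exact posSemidef_conj_diagonal Q fun i => Real.rpow_nonneg (ha i) r

lemma psdPow_psdPow (hA : A.PosSemidef) (r s : ℝ) : psdPow (psdPow A r) s = psdPow A (r * s) := by
  obtain ⟨Q, hQ, a, ha, rfl⟩ := exists_unitary_eq_conj_diagonal_of_posSemidef hA
  simp only [psdPow_conj_diagonal hQ, Real.rpow_mul (ha _)]

lemma psdPow_mul_psdPow (hA : A.PosSemidef) {r s : ℝ} (hr : 0 < r) (hs : 0 < s) :
    psdPow A r * psdPow A s = psdPow A (r + s) := by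
  obtain ⟨Q, hQ, a, ha, rfl⟩ := exists_unitary_eq_conj_diagonal_of_posSemidef hA
  simp only [psdPow_conj_diagonal hQ, conj_diagonal_mul_conj_diagonal hQ, ← Complex.ofReal_mul,
    ← Real.rpow_add_of_nonneg (ha _) hr.le hs.le]

lemma psdPow_one (hA : A.IsHermitian) : psdPow A 1 = A := by
  obtain ⟨Q, hQ, hAQ⟩ := exists_unitary_eq_conj_diagonal_eigsDesc hA
  rw [hAQ, psdPow_conj_diagonal hQ]
  simp only [Real.rpow_one]

end PsdPow

section TopProduct

variable {d k : ℕ}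

lemma val_le_val_of_strictMono {f : Fin k → Fin d} (hf : StrictMono f) (r : Fin k) :
    (r : ℕ) ≤ f r := by
  have hcard := card_le_card_of_injOn (s := Iio r) (t := Iio (f r)) f
    (fun i hi => by simpa using hf (by simpa using hi)) hf.injective.injOn
  simpa only [Fin.card_Iio] using hcard

lemma prod_filter_val_lt_eq_prod_castLE {M : Type*} [CommMonoid M] (hk : k ≤ d) (f : Fin d → M) :
    ∏ i : Fin d with i.val < k, f i = ∏ r : Fin k, f (r.castLE hk) := by
  have : (univ.filter fun i : Fin d => (i : ℕ) < k) = univ.map (Fin.castLEEmb hk) := by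
    ext i
    simp only [mem_filter, mem_univ, true_and, Finset.mem_map]
    exact ⟨fun hi => ⟨⟨i, hi⟩, rfl⟩, by rintro ⟨r, rfl⟩; exact r.2⟩
  rw [this, prod_map]
  rfl

lemma prod_le_prod_filter_val_lt_of_antitone {x : Fin d → ℝ} (hx : Antitone x)
    (hx₀ : ∀ i, 0 ≤ x i) {s : Finset (Fin d)} (hs : s.card = k) :
    ∏ i ∈ s, x i ≤ ∏ i : Fin d with i.val < k, x i := by
  have hk : k ≤ d := by simpa [hs] using card_le_univ s
  rw [prod_filter_val_lt_eq_prod_castLE hk, ← prod_orderEmbOfFin hs]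
  exact prod_le_prod (fun _ _ => hx₀ _) fun r _ =>
    hx (val_le_val_of_strictMono (s.orderEmbOfFin hs).strictMono r)

lemma rpow_prod_filter_val_lt_le_sum {x : Fin d → ℝ} (hx₀ : ∀ i, 0 ≤ x i) (hk : k ≤ d) (p : ℝ) :
    (∏ i : Fin d with i.val < k, x i) ^ p ≤
      ∑ I : Set.powersetCard (Fin d) k, (∏ i ∈ I.1, x i) ^ p := by
  have hcard : (univ.filter fun i : Fin d => (i : ℕ) < k).card = k := by
    rw [Fin.card_filter_val_lt, min_eq_right hk]
  exact single_le_sum (f := fun I : Set.powersetCard (Fin d) k => (∏ i ∈ I.1, x i) ^ p)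
    (fun I _ => Real.rpow_nonneg (prod_nonneg fun i _ => hx₀ i) p)
    (mem_univ (Set.powersetCard.ofCard hcard))

lemma sum_rpow_prod_le_of_antitone {x : Fin d → ℝ} (hx : Antitone x) (hx₀ : ∀ i, 0 ≤ x i) {p : ℝ}
    (hp : 0 ≤ p) :
    ∑ I : Set.powersetCard (Fin d) k, (∏ i ∈ I.1, x i) ^ p ≤
      Fintype.card (Set.powersetCard (Fin d) k) * (∏ i : Fin d with i.val < k, x i) ^ p := by
  rw [← nsmul_eq_mul]
  exact sum_le_card_nsmul _ _ _ fun I _ => Real.rpow_le_rpow (prod_nonneg fun i _ => hx₀ i)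
    (prod_le_prod_filter_val_lt_of_antitone hx hx₀ I.2) hp

end TopProduct

section Asymptotics

variable {f : ℝ → ℝ} {c C x : ℝ}

lemma tendsto_const_rpow_inv_mul (hc : 0 < c) (x : ℝ) :
    Tendsto (fun p : ℝ => c ^ p⁻¹ * x) atTop (𝓝 x) := by
  simpa only [Real.rpow_zero, one_mul, Function.comp_def] using
    ((Real.continuousAt_const_rpow hc.ne').tendsto.comp tendsto_inv_atTop_zero).mul_const x

lemma tendsto_of_rpow_bounds (hc : 0 < c) (hC : 0 < C) (hx : 0 ≤ x) (hf : ∀ p > 0, 0 ≤ f p)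
    (hle : ∀ p > 0, c * x ^ p ≤ f p ^ p) (hge : ∀ p > 0, f p ^ p ≤ C * x ^ p) :
    Tendsto f atTop (𝓝 x) := by
  have hroot {K p : ℝ} (hK : 0 < K) (hp : 0 < p) : (K ^ p⁻¹ * x) ^ p = K * x ^ p := by
    rw [Real.mul_rpow (Real.rpow_nonneg hK.le _) hx, Real.rpow_inv_rpow hK.le hp.ne']
  refine tendsto_of_tendsto_of_tendsto_of_le_of_le' (tendsto_const_rpow_inv_mul hc x)
    (tendsto_const_rpow_inv_mul hC x) ?_ ?_ <;>
    filter_upwards [eventually_gt_atTop 0] with p hp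
  · refine (Real.rpow_le_rpow_iff (by positivity) (hf p hp) hp).mp ?_
    exact (hroot hc hp).trans_le (hle p hp)
  · refine (Real.rpow_le_rpow_iff (hf p hp) (by positivity) hp).mp ?_
    exact (hge p hp).trans_eq (hroot hC hp).symm

lemma tendsto_of_sum_mul_rpow_bounds {ι : Type*} [Fintype ι] {w y : ι → ℝ} {N m : ℝ}
    (hw : ∀ i, 0 ≤ w i) (hy : ∀ i, 0 ≤ y i) (hm : IsGreatest (y '' {i | w i ≠ 0}) m)
    (hN : 0 < N) (hf : ∀ p > 0, 0 ≤ f p) (hle : ∀ p > 0, f p ^ p ≤ ∑ i, w i * y i ^ p)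
    (hge : ∀ p > 0, ∑ i, w i * y i ^ p ≤ N * f p ^ p) :
    Tendsto f atTop (𝓝 m) := by
  obtain ⟨⟨j, hj, rfl⟩, hmax⟩ := hm
  have hwj : 0 < w j := (hw j).lt_of_ne' hj
  have hsum : 0 < ∑ i, w i := sum_pos' (fun i _ => hw i) ⟨j, mem_univ j, hwj⟩
  refine tendsto_of_rpow_bounds (div_pos hwj hN) hsum (hy j) hf (fun p hp => ?_) fun p hp => ?_
  · rw [div_mul_eq_mul_div, div_le_iff₀' hN]
    calc w j * y j ^ p
        ≤ ∑ i, w i * y i ^ p := single_le_sum (f := fun i => w i * y i ^ p)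
          (fun i _ => mul_nonneg (hw i) (Real.rpow_nonneg (hy i) p)) (mem_univ j)
      _ ≤ N * f p ^ p := hge p hp
  · calc f p ^ p
        ≤ ∑ i, w i * y i ^ p := hle p hp
      _ ≤ ∑ i, w i * y j ^ p := sum_le_sum fun i _ => by
          obtain hi | hi := eq_or_ne (w i) 0
          · simp only [hi, zero_mul, le_refl]
          · exact mul_le_mul_of_nonneg_left
              (Real.rpow_le_rpow (hy i) (hmax ⟨i, hi, rfl⟩) hp.le) (hw i)
      _ = (∑ i, w i) * y j ^ p := (sum_mul ..).symm

end Asymptotics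

section Zmat

variable {d k : ℕ} {A B M V W : Matrix (Fin d) (Fin d) ℂ} {a b : Fin d → ℝ}

lemma posSemidef_psdPow_mul_psdPow_mul_psdPow (hA : A.PosSemidef) (hB : B.PosSemidef) (r s : ℝ) :
    (psdPow A r * psdPow B s * psdPow A r).PosSemidef := by
  have hconj := (posSemidef_psdPow hB s).mul_mul_conjTranspose_same (psdPow A r)
  rwa [(posSemidef_psdPow hA r).isHermitian.eq] at hconj

lemma posSemidef_Zmat (hA : A.PosSemidef) (hB : B.PosSemidef) (p : ℝ) :
    (Zmat A B p).PosSemidef :=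
  posSemidef_psdPow (posSemidef_psdPow_mul_psdPow_mul_psdPow hA hB _ _) _

lemma psdPow_Zmat (hA : A.PosSemidef) (hB : B.PosSemidef) {p : ℝ} (hp : p ≠ 0) :
    psdPow (Zmat A B p) p = psdPow A (p / 2) * psdPow B p * psdPow A (p / 2) := by
  have hM := posSemidef_psdPow_mul_psdPow_mul_psdPow hA hB (p / 2) p
  rw [Zmat, psdPow_psdPow hM, one_div_mul_cancel hp, psdPow_one hM.isHermitian]

lemma trace_compoundMatrix_psdPow (hM : M.PosSemidef) (p : ℝ) :
    (compoundMatrix k (psdPow M p)).trace =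
      ((∑ I : Set.powersetCard (Fin d) k, (∏ i ∈ I.1, eigsDesc M i) ^ p : ℝ) : ℂ) := by
  obtain ⟨Q, hQ, hMQ⟩ := exists_unitary_eq_conj_diagonal_eigsDesc hM.isHermitian
  conv_lhs => rw [hMQ, psdPow_conj_diagonal hQ, trace_compoundMatrix_conj_diagonal hQ]
  simp only [← Complex.ofReal_prod, ← Complex.ofReal_sum,
    Real.finsetProd_rpow _ _ fun i _ => eigsDesc_nonneg hM i]

lemma trace_compoundMatrix_psdPow_Zmat (hA : A.PosSemidef) (hB : B.PosSemidef) {p : ℝ}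
    (hp : 0 < p) :
    (compoundMatrix k (psdPow (Zmat A B p) p)).trace =
      (compoundMatrix k (psdPow A p * psdPow B p)).trace := by
  rw [psdPow_Zmat hA hB hp.ne', compoundMatrix_mul, trace_mul_comm, ← compoundMatrix_mul,
    ← Matrix.mul_assoc, psdPow_mul_psdPow hA (half_pos hp) (half_pos hp), add_halves]

lemma trace_compoundMatrix_psdPow_mul_psdPow (hV : V ∈ unitaryGroup (Fin d) ℂ)
    (hW : W ∈ unitaryGroup (Fin d) ℂ) (ha : ∀ i, 0 ≤ a i) (hb : ∀ i, 0 ≤ b i) (p : ℝ) :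
    (compoundMatrix k (psdPow (V * diagonal (fun i => (a i : ℂ)) * Vᴴ) p *
      psdPow (W * diagonal (fun i => (b i : ℂ)) * Wᴴ) p)).trace =
      ((∑ q : Set.powersetCard (Fin d) k × Set.powersetCard (Fin d) k,
        Complex.normSq (compoundMatrix k (Vᴴ * W) q.1 q.2) *
          ((∏ i ∈ q.1.1, a i) * ∏ j ∈ q.2.1, b j) ^ p : ℝ) : ℂ) := by
  rw [psdPow_conj_diagonal hV, psdPow_conj_diagonal hW, trace_compoundMatrix_conj_diagonal_mul,
    Complex.ofReal_sum]
  refine sum_congr rfl fun q _ => ?_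
  rw [Real.mul_rpow (prod_nonneg fun i _ => ha i) (prod_nonneg fun j _ => hb j),
    ← Real.finsetProd_rpow _ _ fun i _ => ha i, ← Real.finsetProd_rpow _ _ fun j _ => hb j,
    Complex.ofReal_mul, Complex.ofReal_mul, ← Complex.mul_conj, Complex.ofReal_prod,
    Complex.ofReal_prod]
  rfl

lemma sum_prod_eigsDesc_Zmat_rpow (hV : V ∈ unitaryGroup (Fin d) ℂ)
    (hW : W ∈ unitaryGroup (Fin d) ℂ) (ha : ∀ i, 0 ≤ a i) (hb : ∀ i, 0 ≤ b i)
    (hA : A = V * diagonal (fun i => (a i : ℂ)) * Vᴴ)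
    (hB : B = W * diagonal (fun i => (b i : ℂ)) * Wᴴ) {p : ℝ} (hp : 0 < p) :
    ∑ I : Set.powersetCard (Fin d) k, (∏ i ∈ I.1, eigsDesc (Zmat A B p) i) ^ p =
      ∑ q : Set.powersetCard (Fin d) k × Set.powersetCard (Fin d) k,
        Complex.normSq (compoundMatrix k (Vᴴ * W) q.1 q.2) *
          ((∏ i ∈ q.1.1, a i) * ∏ j ∈ q.2.1, b j) ^ p := by
  have hApsd : A.PosSemidef := hA ▸ posSemidef_conj_diagonal V ha
  have hBpsd : B.PosSemidef := hB ▸ posSemidef_conj_diagonal W hb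
  apply Complex.ofReal_injective
  rw [← trace_compoundMatrix_psdPow (posSemidef_Zmat hApsd hBpsd p),
    trace_compoundMatrix_psdPow_Zmat hApsd hBpsd hp, hA, hB,
    trace_compoundMatrix_psdPow_mul_psdPow hV hW ha hb]

lemma exists_isGreatest_image_compoundMatrix_ne_zero {U : Matrix (Fin d) (Fin d) ℂ}
    (hU : U ∈ unitaryGroup (Fin d) ℂ) (hk : k ≤ d)
    (y : Set.powersetCard (Fin d) k × Set.powersetCard (Fin d) k → ℝ) :
    ∃ m, IsGreatest (y '' {q | compoundMatrix k U q.1 q.2 ≠ 0}) m := by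
  obtain ⟨I, J, hIJ⟩ := exists_compoundMatrix_apply_ne_zero hU (by simpa using hk)
  exact ((Set.toFinite _).isCompact).exists_isGreatest (Set.Nonempty.image y ⟨(I, J), hIJ⟩)

theorem tendsto_prod_eigsDesc_Zmat (hV : V ∈ unitaryGroup (Fin d) ℂ)
    (hW : W ∈ unitaryGroup (Fin d) ℂ) (ha : ∀ i, 0 ≤ a i) (hb : ∀ i, 0 ≤ b i)
    (hA : A = V * diagonal (fun i => (a i : ℂ)) * Vᴴ)
    (hB : B = W * diagonal (fun i => (b i : ℂ)) * Wᴴ) (hk : k ≤ d) {m : ℝ}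
    (hm : IsGreatest ((fun q : Set.powersetCard (Fin d) k × Set.powersetCard (Fin d) k =>
      (∏ i ∈ q.1.1, a i) * ∏ j ∈ q.2.1, b j) ''
        {q | compoundMatrix k (Vᴴ * W) q.1 q.2 ≠ 0}) m) :
    Tendsto (fun p => ∏ i : Fin d with i.val < k, eigsDesc (Zmat A B p) i) atTop (𝓝 m) := by
  have hApsd : A.PosSemidef := hA ▸ posSemidef_conj_diagonal V ha
  have hBpsd : B.PosSemidef := hB ▸ posSemidef_conj_diagonal W hb
  have heigs (p : ℝ) := eigsDesc_nonneg (posSemidef_Zmat hApsd hBpsd p)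
  have hsum {p : ℝ} (hp : 0 < p) := sum_prod_eigsDesc_Zmat_rpow (k := k) hV hW ha hb hA hB hp
  have hm' : IsGreatest ((fun q : Set.powersetCard (Fin d) k × Set.powersetCard (Fin d) k =>
      (∏ i ∈ q.1.1, a i) * ∏ j ∈ q.2.1, b j) ''
        {q | Complex.normSq (compoundMatrix k (Vᴴ * W) q.1 q.2) ≠ 0}) m := by
    simpa only [ne_eq, Complex.normSq_eq_zero] using hm
  have hcard : 0 < (Fintype.card (Set.powersetCard (Fin d) k) : ℝ) := by
    obtain ⟨q, -⟩ := hm.1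
    exact Nat.cast_pos.mpr (Fintype.card_pos_iff.mpr ⟨q.1⟩)
  refine tendsto_of_sum_mul_rpow_bounds (fun q => Complex.normSq_nonneg _)
    (fun q => mul_nonneg (prod_nonneg fun i _ => ha i) (prod_nonneg fun j _ => hb j)) hm' hcard
    (fun p _ => prod_nonneg fun i _ => heigs p i) (fun p hp => ?_) fun p hp => ?_
  · exact (rpow_prod_filter_val_lt_le_sum (heigs p) hk p).trans_eq (hsum hp)
  · exact (hsum hp).symm.trans_le
      (sum_rpow_prod_le_of_antitone (eigsDesc_antitone _) (heigs p) hp.le)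

end Zmat

theorem anti_lie_trotter_eigenvalue_products_general
    {d : ℕ} (A B V W : Matrix (Fin d) (Fin d) ℂ) (a b : Fin d → ℝ)
    (hV : V ∈ Matrix.unitaryGroup (Fin d) ℂ)
    (hW : W ∈ Matrix.unitaryGroup (Fin d) ℂ)
    (ha0 : ∀ i, 0 ≤ a i) (hb0 : ∀ i, 0 ≤ b i)
    (hAd : A = V * Matrix.diagonal (fun i => (a i : ℂ)) * Vᴴ)
    (hBd : B = W * Matrix.diagonal (fun i => (b i : ℂ)) * Wᴴ)
    (k : ℕ) (hkd : k ≤ d) :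
    ∃ m, IsGreatest
      {x : ℝ | ∃ (I J : Finset (Fin d)) (hI : I.card = k) (hJ : J.card = k),
        ((Vᴴ * W).submatrix (fun r : Fin k => ((I.orderIsoOfFin hI r : Fin d)))
            (fun c : Fin k => ((J.orderIsoOfFin hJ c : Fin d)))).det ≠ 0 ∧
        x = (∏ i ∈ I, a i) * ∏ j ∈ J, b j} m ∧
      Tendsto (fun p : ℝ => ∏ i ∈ Finset.univ.filter (fun i : Fin d => (i : ℕ) < k),
        eigsDesc (Zmat A B p) i) atTop (𝓝 m) := by
  have hU : Vᴴ * W ∈ unitaryGroup (Fin d) ℂ := mul_mem (Unitary.star_mem hV) hW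
  obtain ⟨m, hm⟩ := exists_isGreatest_image_compoundMatrix_ne_zero hU hkd
    fun q => (∏ i ∈ q.1.1, a i) * ∏ j ∈ q.2.1, b j
  refine ⟨m, ?_, tendsto_prod_eigsDesc_Zmat hV hW ha0 hb0 hAd hBd hkd hm⟩
  convert hm using 1
  ext x
  exact ⟨fun ⟨I, J, hI, hJ, hdet, hx⟩ => ⟨(⟨I, hI⟩, ⟨J, hJ⟩), hdet, hx.symm⟩,
    fun ⟨⟨I, J⟩, hdet, hx⟩ => ⟨I.1, J.1, I.2, J.2, hdet, hx.symm⟩⟩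

/-- For every `k = 1,…,d`, the product `λ_1 ⋯ λ_k` of the limiting eigenvalues of
`Z_p = (A^{p/2} B^p A^{p/2})^{1/p}` equals
`max{a_I b_J : |I| = |J| = k, det (V*W)_{I,J} ≠ 0}`. -/
theorem anti_lie_trotter_eigenvalue_products
    {d : ℕ} (A B V W : Matrix (Fin d) (Fin d) ℂ) (a b : Fin d → ℝ)
    (hA : A.PosSemidef) (hB : B.PosSemidef)
    (hV : V ∈ Matrix.unitaryGroup (Fin d) ℂ)
    (hW : W ∈ Matrix.unitaryGroup (Fin d) ℂ)
    (ha : Antitone a) (hb : Antitone b)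
    (ha0 : ∀ i, 0 ≤ a i) (hb0 : ∀ i, 0 ≤ b i)
    (hAd : A = V * Matrix.diagonal (fun i => (a i : ℂ)) * Vᴴ)
    (hBd : B = W * Matrix.diagonal (fun i => (b i : ℂ)) * Wᴴ)
    (lam : Fin d → ℝ)
    (hlam : ∀ i, Tendsto (fun p : ℝ => eigsDesc (Zmat A B p) i) atTop (𝓝 (lam i)))
    (k : ℕ) (hk1 : 1 ≤ k) (hkd : k ≤ d) :
    IsGreatest
      {x : ℝ | ∃ (I J : Finset (Fin d)) (hI : I.card = k) (hJ : J.card = k),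
        ((Vᴴ * W).submatrix (fun r : Fin k => ((I.orderIsoOfFin hI r : Fin d)))
            (fun c : Fin k => ((J.orderIsoOfFin hJ c : Fin d)))).det ≠ 0 ∧
        x = (∏ i ∈ I, a i) * ∏ j ∈ J, b j}
      (∏ i ∈ Finset.univ.filter (fun i : Fin d => (i : ℕ) < k), lam i) := by
  obtain ⟨m, hm, hlim⟩ := anti_lie_trotter_eigenvalue_products_general A B V W a b hV hW ha0 hb0
    hAd hBd k hkd
  rwa [tendsto_nhds_unique (tendsto_finsetProd _ fun i _ => hlam i) hlim]
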